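/- For every integer k ≥ 0, (3/(2ω₅))·binom(k+4,4)·Λ_k(φ₇) = 245760·(k+1)(k+2)(k+3)(k+4)·(15 − 5k − k²)(−3 + 5k + k²) / ∏_{j=−5,−3,−1,1,3,5,7,9,11,13,15} (2k + j), where Λ_k(φ₇) = ω₅ ∫_{−1}^{1} (C_k^{5/2}(t)/C_k^{5/2}(1)) φ₇(t)(1−t²)² dt and φ₇(t) = 2^{5/2}(1−t)^{1/2}(1+t)². In particular Λ₀(φ₇) > 0, Λ₁(φ₇) > 0, and Λ_k(φ₇) < 0 for all k ≥ 2. -/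

import Mathlib

/-- `C` is the family of Gegenbauer (ultraspherical) polynomials with parameter `α`,
characterized by the generating function `(1 - 2rt + r²)^(-α) = Σ_k C_k^α(t) r^k`
for `t ∈ [-1, 1]` and `|r|` small. -/
def IsGegenbauer (α : ℝ) (C : ℕ → Polynomial ℝ) : Prop :=
  ∀ t ∈ Set.Icc (-1:ℝ) 1, ∀ r : ℝ, |r| < 1/2 →
    HasSum (fun k : ℕ => (C k).eval t * r ^ k) ((1 - 2*r*t + r^2) ^ (-α))

/-- The weight `φ₇(t) = 2^{5/2} (1-t)^{1/2} (1+t)²`. -/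
noncomputable def phi7 (t : ℝ) : ℝ := 2 ^ ((5:ℝ)/2) * Real.sqrt (1 - t) * (1 + t) ^ 2

/-- The Funk–Hecke coefficient `Λ_k(φ₇)` in dimension `d = 7`, with `ω₅ = π³`. -/
noncomputable def Lambda7 (C : ℕ → Polynomial ℝ) (k : ℕ) : ℝ :=
  Real.pi ^ 3 *
    ∫ t in (-1:ℝ)..1, ((C k).eval t / (C k).eval 1) * phi7 t * (1 - t^2) ^ 2

/-!
The generating function satisfies a first-order differential equation in `r`, which yields the
recurrence and the second-order differential equation of the Gegenbauer polynomials `Cₖ` with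
parameter `b + 1 / 2`. Integrating by parts against `(1 - t)ᵃ (1 + t)ᵇ` turns these into two
first-order relations for the integral of `Cₖ`: one from `k` to `k + 1`, which evaluates it in terms
of Pochhammer symbols, and one from `a` to `a + 1`. Up to a factor, `Λₖ(φ₇)` is the integral with
weight `(1 - t)^(5/2) (1 + t)⁴`, whereas the parameter `5/2` requires `b = 2`. Expanding
`(1 + t)² = 4 - 4 (1 - t) + (1 - t)²` reduces it to `b = 2` and `a = 5/2, 7/2, 9/2`, and combining
the three terms produces the two quadratic factors.
-/

open Polynomial Topology
open scoped PowerSeries Nat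

section FormalPowerSeries

variable {𝕜 : Type*} [NontriviallyNormedField 𝕜] {F G : 𝕜⟦X⟧} {f g : 𝕜 → 𝕜}

/-- The formal power series `F` converges to `f` near `0`. It turns differential equations for `f`
into identities in `𝕜⟦X⟧`, whose coefficients can be compared. -/
def HasPowerSeriesAtZero (F : 𝕜⟦X⟧) (f : 𝕜 → 𝕜) : Prop :=
  ∀ᶠ z in 𝓝 0, HasSum (fun n ↦ F.coeff n * z ^ n) (f z)

theorem hasPowerSeriesAtZero_iff_hasFPowerSeriesAt :
    HasPowerSeriesAtZero F f ↔
      HasFPowerSeriesAt f (FormalMultilinearSeries.ofScalars 𝕜 fun n ↦ F.coeff n) 0 := by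
  simp only [HasPowerSeriesAtZero, hasFPowerSeriesAt_iff, FormalMultilinearSeries.coeff_ofScalars,
    smul_eq_mul, zero_add, mul_comm]

namespace HasPowerSeriesAtZero

theorem eq_of_eventuallyEq (hF : HasPowerSeriesAtZero F f) (hG : HasPowerSeriesAtZero G g)
    (hfg : f =ᶠ[𝓝 0] g) : F = G := by
  rw [hasPowerSeriesAtZero_iff_hasFPowerSeriesAt] at hF hG
  ext n
  exact congrFun (FormalMultilinearSeries.ofScalars_series_injective 𝕜 𝕜
    ((hF.congr hfg).eq_formalMultilinearSeries hG)) n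

theorem constantCoeff_eq (hF : HasPowerSeriesAtZero F f) : F.constantCoeff = f 0 := by
  have hsum : HasSum (fun n ↦ F.coeff n * (0 : 𝕜) ^ n) (F.coeff 0 * 0 ^ 0) :=
    hasSum_single 0 fun n hn ↦ by rw [zero_pow hn, mul_zero]
  simpa using hsum.unique hF.self_of_nhds

theorem add (hF : HasPowerSeriesAtZero F f) (hG : HasPowerSeriesAtZero G g) :
    HasPowerSeriesAtZero (F + G) fun z ↦ f z + g z := by
  filter_upwards [hF, hG] with z hFz hGz
  simpa only [map_add, add_mul] using hFz.add hGz

theorem sub (hF : HasPowerSeriesAtZero F f) (hG : HasPowerSeriesAtZero G g) :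
    HasPowerSeriesAtZero (F - G) fun z ↦ f z - g z := by
  filter_upwards [hF, hG] with z hFz hGz
  simpa only [map_sub, sub_mul] using hFz.sub hGz

theorem C_mul (a : 𝕜) (hF : HasPowerSeriesAtZero F f) :
    HasPowerSeriesAtZero (PowerSeries.C a * F) fun z ↦ a * f z := by
  filter_upwards [hF] with z hFz
  simpa only [PowerSeries.coeff_C_mul, mul_assoc] using hFz.mul_left a

theorem X_mul (hF : HasPowerSeriesAtZero F f) :
    HasPowerSeriesAtZero (PowerSeries.X * F) fun z ↦ z * f z := by
  filter_upwards [hF] with z hFz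
  rw [← hasSum_nat_add_iff' 1]
  simpa [PowerSeries.coeff_succ_X_mul, pow_succ', mul_left_comm] using hFz.mul_left z

theorem derivative [CompleteSpace 𝕜] (hF : HasPowerSeriesAtZero F f) :
    HasPowerSeriesAtZero (PowerSeries.derivative 𝕜 F) (deriv f) := by
  obtain ⟨ρ, hρ⟩ := hasPowerSeriesAtZero_iff_hasFPowerSeriesAt.1 hF
  filter_upwards [hasFPowerSeriesAt_iff.1 hρ.fderiv.hasFPowerSeriesAt] with z hz
  have hsum := (ContinuousLinearMap.apply 𝕜 𝕜 (1 : 𝕜)).hasSum hz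
  simpa [FormalMultilinearSeries.derivSeries_coeff_one, FormalMultilinearSeries.coeff_ofScalars,
    PowerSeries.coeff_derivative, mul_comm, mul_left_comm] using hsum

end HasPowerSeriesAtZero

end FormalPowerSeries

theorem eq_of_eqOn_eval_Icc {a b : ℝ} (hab : a < b) {p q : ℝ[X]}
    (h : Set.EqOn p.eval q.eval (Set.Icc a b)) : p = q :=
  Polynomial.eq_of_infinite_eval_eq p q ((Set.Icc_infinite hab).mono h)

section GeneratingFunction

variable {r t : ℝ}

theorem one_sub_two_mul_add_sq_pos (ht : t ∈ Set.Icc (-1) 1) (hr : |r| < 1) :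
    0 < 1 - 2 * r * t + r ^ 2 := by
  have hdist : 1 - 2 * r * t + r ^ 2 = (1 - |r|) ^ 2 + 2 * (|r| - r * t) := by
    rw [sub_sq, sq_abs]; ring
  have hrt : r * t ≤ |r| := calc
    r * t ≤ |r| * |t| := by rw [← abs_mul]; exact le_abs_self _
    _ ≤ |r| := mul_le_of_le_one_right (abs_nonneg r) (abs_le.2 ht)
  have : 0 < (1 - |r|) ^ 2 := pow_pos (sub_pos.2 hr) 2
  linarith

theorem mul_deriv_one_sub_two_mul_add_sq_rpow (α : ℝ) (h : 0 < 1 - 2 * r * t + r ^ 2) :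
    (1 - 2 * r * t + r ^ 2) * deriv (fun s : ℝ ↦ (1 - 2 * s * t + s ^ 2) ^ (-α)) r =
      2 * α * (t - r) * (1 - 2 * r * t + r ^ 2) ^ (-α) := by
  have hbase : HasDerivAt (fun s : ℝ ↦ 1 - 2 * s * t + s ^ 2) (-(2 * t) + 2 * r) r := by
    simpa using ((((hasDerivAt_id' r).const_mul 2).mul_const t).const_sub 1).fun_add
      ((hasDerivAt_id' r).fun_pow 2)
  rw [(hbase.rpow_const (Or.inl h.ne')).deriv, Real.rpow_sub_one h.ne']
  field_simp
  ring

end GeneratingFunction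

namespace IsGegenbauer

section GeneratingFunction

variable {α t : ℝ} {G : ℕ → ℝ[X]}

theorem hasPowerSeriesAtZero (hG : IsGegenbauer α G) (ht : t ∈ Set.Icc (-1) 1) :
    HasPowerSeriesAtZero (PowerSeries.mk fun k ↦ (G k).eval t)
      fun r : ℝ ↦ (1 - 2 * r * t + r ^ 2) ^ (-α) := by
  filter_upwards [Metric.ball_mem_nhds (0 : ℝ) one_half_pos] with r hr
  simpa only [PowerSeries.coeff_mk] using hG t ht r (by simpa using hr)

theorem derivative_mk_eval (hG : IsGegenbauer α G) (ht : t ∈ Set.Icc (-1) 1) :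
    letI F : ℝ⟦X⟧ := PowerSeries.mk fun k ↦ (G k).eval t
    letI F' := PowerSeries.derivative ℝ F
    F' - PowerSeries.C (2 * t) * (PowerSeries.X * F') + PowerSeries.X * (PowerSeries.X * F') =
      PowerSeries.C (2 * α * t) * F - PowerSeries.C (2 * α) * (PowerSeries.X * F) := by
  have hF := hG.hasPowerSeriesAtZero ht
  have hF' := hF.derivative
  refine ((hF'.sub (hF'.X_mul.C_mul (2 * t))).add hF'.X_mul.X_mul).eq_of_eventuallyEq
    ((hF.C_mul (2 * α * t)).sub (hF.X_mul.C_mul (2 * α))) ?_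
  filter_upwards [Metric.ball_mem_nhds (0 : ℝ) one_pos] with r hr
  have hode := mul_deriv_one_sub_two_mul_add_sq_rpow α
    (one_sub_two_mul_add_sq_pos ht (by simpa using hr))
  linear_combination hode

theorem zero_eq_one (hG : IsGegenbauer α G) : G 0 = 1 :=
  eq_of_eqOn_eval_Icc (neg_lt_self one_pos) fun t ht ↦ by
    simpa using (hG.hasPowerSeriesAtZero ht).constantCoeff_eq

theorem one_eq (hG : IsGegenbauer α G) : G 1 = C (2 * α) * X :=
  eq_of_eqOn_eval_Icc (neg_lt_self one_pos) fun t ht ↦ by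
    have h := congrArg (PowerSeries.coeff 0) (hG.derivative_mk_eval ht)
    simpa only [map_add, map_sub, PowerSeries.coeff_C_mul, PowerSeries.coeff_zero_X_mul,
      PowerSeries.coeff_derivative, PowerSeries.coeff_mk, hG.zero_eq_one, Nat.cast_zero, zero_add,
      mul_zero, mul_one, sub_zero, add_zero, eval_one, eval_C_mul, eval_X] using h

theorem recurrence (hG : IsGegenbauer α G) (k : ℕ) :
    ((k : ℝ[X]) + 2) * G (k + 2) =
      (2 * (k : ℝ[X]) + 2 + C (2 * α)) * X * G (k + 1) - ((k : ℝ[X]) + C (2 * α)) * G k :=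
  eq_of_eqOn_eval_Icc (neg_lt_self one_pos) fun t ht ↦ by
    have h := congrArg (PowerSeries.coeff (k + 1)) (hG.derivative_mk_eval ht)
    simp only [map_add, map_sub, PowerSeries.coeff_C_mul, PowerSeries.coeff_succ_X_mul,
      PowerSeries.coeff_derivative, PowerSeries.coeff_mk] at h
    simp only [eval_add, eval_sub, eval_mul, eval_natCast, eval_ofNat, eval_C, eval_X]
    cases k <;>
    · simp only [PowerSeries.coeff_zero_X_mul, PowerSeries.coeff_succ_X_mul,
        PowerSeries.coeff_derivative, PowerSeries.coeff_mk] at h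
      push_cast at h ⊢
      linear_combination h

end GeneratingFunction

section Derivatives

variable {α : ℝ} {G : ℕ → ℝ[X]}

theorem derivative_succ_and_X_mul_derivative_succ (hG : IsGegenbauer α G) (k : ℕ) :
    derivative (G (k + 1)) = X * derivative (G k) + ((k : ℝ[X]) + C (2 * α)) * G k ∧
      X * derivative (G (k + 1)) = derivative (G k) + ((k : ℝ[X]) + 1) * G (k + 1) := by
  induction k with
  | zero => simp [hG.zero_eq_one, hG.one_eq, mul_comm]
  | succ k ih =>
    obtain ⟨hder, hXder⟩ := ih
    have hrec := hG.recurrence k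
    have hder_succ : derivative (G (k + 2)) =
        X * derivative (G (k + 1)) + ((k : ℝ[X]) + 1 + C (2 * α)) * G (k + 1) := by
      have hk : (k : ℝ[X]) + 2 ≠ 0 := by exact_mod_cast (k + 1).succ_ne_zero
      have hrec' := congrArg derivative hrec
      simp only [derivative_mul, derivative_sub, derivative_add, derivative_natCast, derivative_C,
        derivative_X, derivative_ofNat] at hrec'
      refine mul_left_cancel₀ hk ?_
      linear_combination hrec' + ((k : ℝ[X]) + C (2 * α)) * hXder
    push_cast
    refine ⟨hder_succ, ?_⟩
    linear_combination X * hder_succ - hrec + X * hXder - hder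

theorem derivative_succ (hG : IsGegenbauer α G) (k : ℕ) :
    derivative (G (k + 1)) = X * derivative (G k) + ((k : ℝ[X]) + C (2 * α)) * G k :=
  (hG.derivative_succ_and_X_mul_derivative_succ k).1

theorem one_sub_X_sq_mul_derivative (hG : IsGegenbauer α G) (k : ℕ) :
    (1 - X ^ 2) * derivative (G k) =
      ((k : ℝ[X]) + C (2 * α)) * X * G k - ((k : ℝ[X]) + 1) * G (k + 1) := by
  obtain ⟨hder, hXder⟩ := hG.derivative_succ_and_X_mul_derivative_succ k
  linear_combination X * hder - hXder

theorem differential_equation (hG : IsGegenbauer α G) (k : ℕ) :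
    (1 - X ^ 2) * derivative (derivative (G k)) =
      (1 + C (2 * α)) * X * derivative (G k) -
        (k : ℝ[X]) * ((k : ℝ[X]) + C (2 * α)) * G k := by
  have h := congrArg derivative (hG.one_sub_X_sq_mul_derivative k)
  simp only [derivative_mul, derivative_sub, derivative_add, derivative_natCast, derivative_C,
    derivative_X, derivative_X_sq, derivative_one, map_ofNat] at h
  linear_combination h + (-k - 1) * hG.derivative_succ k

theorem succ_mul_eval_one_succ (hG : IsGegenbauer α G) (k : ℕ) :
    ((k : ℝ) + 1) * (G (k + 1)).eval 1 = ((k : ℝ) + 2 * α) * (G k).eval 1 := by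
  have h := congrArg (eval 1) (hG.one_sub_X_sq_mul_derivative k)
  simp only [eval_add, eval_sub, eval_mul, eval_pow, eval_natCast, eval_C, eval_X, eval_one] at h
  linear_combination h

theorem eval_one (hG : IsGegenbauer α G) (k : ℕ) :
    (G k).eval 1 = (ascPochhammer ℝ k).eval (2 * α) / k ! := by
  induction k with
  | zero => simp [hG.zero_eq_one]
  | succ k ih =>
    have hk : (k : ℝ) + 1 ≠ 0 := by positivity
    have hfact : (k ! : ℝ) ≠ 0 := by positivity
    refine mul_left_cancel₀ hk ?_
    rw [hG.succ_mul_eval_one_succ, ih, ascPochhammer_succ_eval, Nat.factorial_succ, Nat.cast_mul,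
      Nat.cast_succ]
    field_simp
    ring

end Derivatives

end IsGegenbauer

section JacobiIntegral

variable {a b : ℝ}

/-- The integral of a polynomial over `[-1, 1]` against the Jacobi weight `(1 - t)ᵃ (1 + t)ᵇ`; the
Funk–Hecke coefficients are such integrals. The weight is integrable exactly when `-1 < a` and
`-1 < b`. -/
noncomputable def jacobiIntegral (a b : ℝ) (P : ℝ[X]) : ℝ :=
  ∫ t in (-1 : ℝ)..1, (1 - t) ^ a * (1 + t) ^ b * P.eval t

theorem intervalIntegrable_one_sub_rpow_mul_one_add_rpow (ha : -1 < a) (hb : -1 < b) :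
    IntervalIntegrable (fun t : ℝ ↦ (1 - t) ^ a * (1 + t) ^ b) MeasureTheory.volume (-1) 1 := by
  have hleft : IntervalIntegrable (fun t : ℝ ↦ (1 + t) ^ b) MeasureTheory.volume (-1) 0 := by
    simpa using (intervalIntegral.intervalIntegrable_rpow' (a := 0) (b := 1) hb).comp_add_left 1
  have hright : IntervalIntegrable (fun t : ℝ ↦ (1 - t) ^ a) MeasureTheory.volume 0 1 := by
    simpa using (intervalIntegral.intervalIntegrable_rpow' (a := 1) (b := 0) ha).comp_sub_left 1
  refine (hleft.continuousOn_mul ?_).trans (hright.mul_continuousOn ?_)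
  · rw [Set.uIcc_of_le (by norm_num)]
    exact ContinuousOn.rpow_const (f := fun t : ℝ ↦ 1 - t) (by fun_prop)
      fun t ht ↦ Or.inl (by linarith [ht.2] : 0 < 1 - t).ne'
  · rw [Set.uIcc_of_le zero_le_one]
    exact ContinuousOn.rpow_const (f := fun t : ℝ ↦ 1 + t) (by fun_prop)
      fun t ht ↦ Or.inl (by linarith [ht.1] : 0 < 1 + t).ne'

theorem intervalIntegrable_jacobi_mul_eval (ha : -1 < a) (hb : -1 < b) (P : ℝ[X]) :
    IntervalIntegrable (fun t ↦ (1 - t) ^ a * (1 + t) ^ b * P.eval t)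
      MeasureTheory.volume (-1) 1 :=
  (intervalIntegrable_one_sub_rpow_mul_one_add_rpow ha hb).mul_continuousOn
    P.continuous.continuousOn

theorem jacobiIntegral_add (ha : -1 < a) (hb : -1 < b) (P Q : ℝ[X]) :
    jacobiIntegral a b (P + Q) = jacobiIntegral a b P + jacobiIntegral a b Q := by
  simp only [jacobiIntegral, eval_add, mul_add]
  exact intervalIntegral.integral_add (intervalIntegrable_jacobi_mul_eval ha hb P)
    (intervalIntegrable_jacobi_mul_eval ha hb Q)

theorem jacobiIntegral_C_mul (c : ℝ) (P : ℝ[X]) :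
    jacobiIntegral a b (C c * P) = c * jacobiIntegral a b P := by
  simp only [jacobiIntegral, eval_C_mul, mul_left_comm _ c, intervalIntegral.integral_const_mul]

theorem jacobiIntegral_one_sub_X_mul (ha : a + 1 ≠ 0) (P : ℝ[X]) :
    jacobiIntegral a b ((1 - X) * P) = jacobiIntegral (a + 1) b P := by
  refine intervalIntegral.integral_congr fun t ht ↦ ?_
  rw [Set.uIcc_of_le (by norm_num)] at ht
  simp only [eval_mul, eval_sub, eval_one, eval_X, Real.rpow_add_one' (sub_nonneg.2 ht.2) ha]
  ring

theorem jacobiIntegral_one_add_X_mul (hb : b + 1 ≠ 0) (P : ℝ[X]) :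
    jacobiIntegral a b ((1 + X) * P) = jacobiIntegral a (b + 1) P := by
  refine intervalIntegral.integral_congr fun t ht ↦ ?_
  rw [Set.uIcc_of_le (by norm_num)] at ht
  simp only [eval_mul, eval_add, eval_one, eval_X,
    Real.rpow_add_one' (neg_le_iff_add_nonneg'.1 ht.1) hb]
  ring

theorem jacobiIntegral_add_one_right (ha : -1 < a) (hb : -1 < b) (P : ℝ[X]) :
    jacobiIntegral a (b + 1) P = 2 * jacobiIntegral a b P - jacobiIntegral (a + 1) b P := by
  have hpoly : (1 + X) * P = C 2 * P + C (-1) * ((1 - X) * P) := by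
    simp only [map_neg, map_ofNat, map_one]
    ring
  rw [← jacobiIntegral_one_add_X_mul (neg_lt_iff_pos_add.1 hb).ne', hpoly, jacobiIntegral_add ha hb,
    jacobiIntegral_C_mul, jacobiIntegral_C_mul,
    jacobiIntegral_one_sub_X_mul (neg_lt_iff_pos_add.1 ha).ne']
  ring

theorem hasDerivAt_jacobi_mul_eval {t : ℝ} (ht : t ∈ Set.Ioo (-1) 1) (P : ℝ[X]) :
    HasDerivAt (fun s ↦ (1 - s) ^ (a + 1) * (1 + s) ^ (b + 1) * P.eval s)
      ((1 - t) ^ a * (1 + t) ^ b *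
        ((1 - X ^ 2) * derivative P + (C (b - a) - C (a + b + 2) * X) * P).eval t) t := by
  have hsub : 0 < 1 - t := sub_pos.2 ht.2
  have hadd : 0 < 1 + t := neg_lt_iff_pos_add'.1 ht.1
  have hweight := (((hasDerivAt_id' t).const_sub 1).rpow_const (p := a + 1) (Or.inl hsub.ne')).mul
    (((hasDerivAt_id' t).const_add 1).rpow_const (p := b + 1) (Or.inl hadd.ne'))
  refine (hweight.mul (P.hasDerivAt t)).congr_deriv ?_
  simp only [add_sub_cancel_right, Real.rpow_add_one hsub.ne', Real.rpow_add_one hadd.ne',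
    eval_add, eval_sub, eval_mul, eval_pow, eval_one, eval_X, eval_C, Pi.mul_apply]
  ring

theorem jacobiIntegral_by_parts (ha : -1 < a) (hb : -1 < b) (P : ℝ[X]) :
    jacobiIntegral a b ((1 - X ^ 2) * derivative P + (C (b - a) - C (a + b + 2) * X) * P) = 0 := by
  have ha' : 0 < a + 1 := neg_lt_iff_pos_add.1 ha
  have hb' : 0 < b + 1 := neg_lt_iff_pos_add.1 hb
  rw [jacobiIntegral, intervalIntegral.integral_eq_sub_of_hasDerivAt_of_le
    (f := fun t ↦ (1 - t) ^ (a + 1) * (1 + t) ^ (b + 1) * P.eval t) (by norm_num) ?_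
    (fun t ht ↦ hasDerivAt_jacobi_mul_eval ht P) (intervalIntegrable_jacobi_mul_eval ha hb _)]
  · simp [Real.zero_rpow ha'.ne', Real.zero_rpow hb'.ne']
  · have hsub : Continuous fun t : ℝ ↦ (1 - t) ^ (a + 1) :=
      (continuous_const.sub continuous_id).rpow_const fun _ ↦ Or.inr ha'.le
    have hadd : Continuous fun t : ℝ ↦ (1 + t) ^ (b + 1) :=
      (continuous_const.add continuous_id).rpow_const fun _ ↦ Or.inr hb'.le
    exact ((hsub.mul hadd).mul P.continuous).continuousOn

theorem jacobiIntegral_zero_right_one (ha : -1 < a) :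
    jacobiIntegral a 0 1 = 2 ^ (a + 1) / (a + 1) := by
  have ha' : a + 1 ≠ 0 := (neg_lt_iff_pos_add.1 ha).ne'
  simp only [jacobiIntegral, Real.rpow_zero, eval_one, mul_one]
  rw [intervalIntegral.integral_comp_sub_left (fun x : ℝ ↦ x ^ a), integral_rpow (Or.inl ha),
    sub_self, Real.zero_rpow ha', sub_zero]
  norm_num

theorem jacobiIntegral_add_one_right_one (ha : -1 < a) (hb : -1 < b) :
    (a + b + 2) * jacobiIntegral a (b + 1) 1 = 2 * (b + 1) * jacobiIntegral a b 1 := by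
  have hparts := jacobiIntegral_by_parts ha hb 1
  have hpoly : (1 - X ^ 2) * derivative 1 + (C (b - a) - C (a + b + 2) * X) * 1 =
      C (2 * (b + 1)) * 1 + C (-(a + b + 2)) * ((1 + X) * 1) := by
    simp only [derivative_one, map_sub, map_add, map_mul, map_neg, map_ofNat, map_one]
    ring
  rw [hpoly, jacobiIntegral_add ha hb, jacobiIntegral_C_mul, jacobiIntegral_C_mul,
    jacobiIntegral_one_add_X_mul (neg_lt_iff_pos_add.1 hb).ne'] at hparts
  linear_combination -hparts

end JacobiIntegral

namespace IsGegenbauer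

section JacobiIntegral

variable {a b : ℝ} {G : ℕ → ℝ[X]}

/- Integrating by parts twice moves the Gegenbauer operator from `G k` onto `(1 - t) ^ (a - b + 1)`,
where it acts as a combination of the powers `a - b + 1` and `a - b`. The test polynomial below
collects the boundary terms of both integrations. -/
theorem jacobiIntegral_add_one_left (hG : IsGegenbauer (b + 1 / 2) G) (ha : -1 < a) (hb : -1 < b)
    (k : ℕ) :
    (a - b + 1 - k) * (a + b + 2 + k) * jacobiIntegral (a + 1) b (G k) =
      2 * (a + 1) * (a - b + 1) * jacobiIntegral a b (G k) := by
  have hparts := jacobiIntegral_by_parts ha hb ((1 - X) * derivative (G k) + C (a - b + 1) * G k)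
  have hode := hG.differential_equation k
  have hpoly : (1 - X ^ 2) * derivative ((1 - X) * derivative (G k) + C (a - b + 1) * G k) +
        (C (b - a) - C (a + b + 2) * X) * ((1 - X) * derivative (G k) + C (a - b + 1) * G k) =
      C (-(2 * (a + 1) * (a - b + 1))) * G k +
        C ((a - b + 1 - k) * (a + b + 2 + k)) * ((1 - X) * G k) := by
    rw [show 2 * (b + 1 / 2) = 2 * b + 1 by ring] at hode
    simp only [derivative_mul, derivative_one, derivative_X, derivative_C, map_sub, map_add,
      map_mul, map_neg, map_ofNat, map_one, map_natCast] at hode ⊢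
    linear_combination (1 - X) * hode
  rw [hpoly, jacobiIntegral_add ha hb, jacobiIntegral_C_mul, jacobiIntegral_C_mul,
    jacobiIntegral_one_sub_X_mul (neg_lt_iff_pos_add.1 ha).ne'] at hparts
  linear_combination hparts

theorem jacobiIntegral_succ (hG : IsGegenbauer (b + 1 / 2) G) (ha : -1 < a) (hb : -1 < b)
    (k : ℕ) :
    ((k : ℝ) + 1) * (a + b + 2 + k) * jacobiIntegral a b (G (k + 1)) =
      (k + 2 * b + 1) * (b - a + k) * jacobiIntegral a b (G k) := by
  have hparts := jacobiIntegral_by_parts ha hb (G k)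
  have hder := hG.one_sub_X_sq_mul_derivative k
  have hpoly : (1 - X ^ 2) * derivative (G k) + (C (b - a) - C (a + b + 2) * X) * G k =
      C (k + 2 * b - 2 * a - 1) * G k + C (a - b + 1 - k) * ((1 - X) * G k) +
        C (-((k : ℝ) + 1)) * G (k + 1) := by
    rw [show 2 * (b + 1 / 2) = 2 * b + 1 by ring] at hder
    simp only [map_sub, map_add, map_mul, map_neg, map_ofNat, map_one, map_natCast] at hder ⊢
    linear_combination hder
  rw [hpoly, jacobiIntegral_add ha hb, jacobiIntegral_add ha hb, jacobiIntegral_C_mul,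
    jacobiIntegral_C_mul, jacobiIntegral_C_mul,
    jacobiIntegral_one_sub_X_mul (neg_lt_iff_pos_add.1 ha).ne'] at hparts
  linear_combination hG.jacobiIntegral_add_one_left ha hb k - (a + b + 2 + k) * hparts

theorem ascPochhammer_mul_jacobiIntegral (hG : IsGegenbauer (b + 1 / 2) G) (ha : -1 < a)
    (hb : -1 < b) (k : ℕ) :
    (ascPochhammer ℝ k).eval (a + b + 2) * jacobiIntegral a b (G k) =
      (ascPochhammer ℝ k).eval (b - a) * (G k).eval 1 * jacobiIntegral a b 1 := by
  induction k with
  | zero => simp [hG.zero_eq_one]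
  | succ k ih =>
    have hk : (k : ℝ) + 1 ≠ 0 := by positivity
    have hval := hG.succ_mul_eval_one_succ k
    have hsucc := hG.jacobiIntegral_succ ha hb k
    refine mul_left_cancel₀ hk ?_
    rw [ascPochhammer_succ_eval, ascPochhammer_succ_eval]
    linear_combination (ascPochhammer ℝ k).eval (a + b + 2) * hsucc +
      (k + 2 * b + 1) * (b - a + k) * ih -
      (ascPochhammer ℝ k).eval (b - a) * (b - a + k) * jacobiIntegral a b 1 * hval

end JacobiIntegral

end IsGegenbauer

theorem ascPochhammer_eval_mul_eval_add {S : Type*} [CommSemiring S] (m n : ℕ) (x : S) :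
    (ascPochhammer S m).eval x * (ascPochhammer S n).eval (x + m) =
      (ascPochhammer S (m + n)).eval x := by
  simp [← ascPochhammer_mul]

theorem two_mul_natCast_sub_ne_zero (k : ℕ) {n : ℕ} (hn : Odd n) : 2 * (k : ℝ) - n ≠ 0 := by
  rw [sub_ne_zero]
  exact_mod_cast fun h : 2 * k = n ↦ Nat.not_even_iff_odd.2 hn (h ▸ even_two_mul k)

theorem jacobiIntegral_five_halves_two_one :
    jacobiIntegral (5 / 2) 2 1 = 64 / 693 * 2 ^ (7 / 2 : ℝ) := by
  have h₀ := jacobiIntegral_zero_right_one (a := 5 / 2) (by norm_num)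
  have h₁ := jacobiIntegral_add_one_right_one (a := 5 / 2) (b := 0) (by norm_num) (by norm_num)
  have h₂ := jacobiIntegral_add_one_right_one (a := 5 / 2) (b := 1) (by norm_num) (by norm_num)
  norm_num at h₀ h₁ h₂
  linarith

theorem Lambda7_eq_jacobiIntegral (G : ℕ → ℝ[X]) (k : ℕ) :
    Lambda7 G k =
      Real.pi ^ 3 * (2 ^ (5 / 2 : ℝ) / (G k).eval 1 * jacobiIntegral (5 / 2) 4 (G k)) := by
  rw [Lambda7]
  congr 1
  rw [jacobiIntegral, ← intervalIntegral.integral_const_mul]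
  refine intervalIntegral.integral_congr fun t ht ↦ ?_
  rw [Set.uIcc_of_le (by norm_num)] at ht
  have hsub : (1 - t) ^ (5 / 2 : ℝ) = √(1 - t) * (1 - t) ^ 2 := by
    rw [Real.sqrt_eq_rpow, ← Real.rpow_add_natCast' (sub_nonneg.2 ht.2) (by norm_num)]
    norm_num
  have hadd : (1 + t) ^ (4 : ℝ) = (1 + t) ^ 4 := by exact_mod_cast Real.rpow_natCast (1 + t) 4
  simp only [phi7, hsub, hadd]
  ring

namespace IsGegenbauer

section FiveHalves

variable {G : ℕ → ℝ[X]}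

theorem eval_one_eq_choose (hG : IsGegenbauer (5 / 2) G) (k : ℕ) :
    (G k).eval 1 = (k + 4).choose 4 := by
  have hfact : (k ! : ℝ) ≠ 0 := by positivity
  rw [hG.eval_one, show (2 : ℝ) * (5 / 2) = (5 : ℕ) by norm_num,
    ascPochhammer_nat_eq_natCast_ascFactorial, Nat.ascFactorial_eq_factorial_mul_choose,
    Nat.cast_mul, mul_div_cancel_left₀ _ hfact, add_comm, Nat.choose_symm_add]

theorem jacobiIntegral_five_halves_two (hG : IsGegenbauer (5 / 2) G) (k : ℕ) :
    (2 * (k : ℝ) - 1) * (2 * k + 1) * (2 * k + 3) * (2 * k + 5) * (2 * k + 7) * (2 * k + 9) *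
        (2 * k + 11) * jacobiIntegral (5 / 2) 2 (G k) =
      -960 * 2 ^ (7 / 2 : ℝ) * (G k).eval 1 := by
  have hpos : 0 < (ascPochhammer ℝ k).eval (13 / 2) := ascPochhammer_pos k _ (by norm_num)
  have hclosed := ascPochhammer_mul_jacobiIntegral (a := 5 / 2) (b := 2) (G := G)
    (by norm_num; exact hG) (by norm_num) (by norm_num) k
  have hshift : (ascPochhammer ℝ k).eval (-1 / 2 : ℝ) * (ascPochhammer ℝ 7).eval (-1 / 2 + k : ℝ) =
      (ascPochhammer ℝ 7).eval (-1 / 2 : ℝ) * (ascPochhammer ℝ k).eval (13 / 2) := by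
    rw [ascPochhammer_eval_mul_eval_add, add_comm k, ← ascPochhammer_eval_mul_eval_add]
    norm_num
  rw [jacobiIntegral_five_halves_two_one] at hclosed
  norm_num [ascPochhammer_succ_eval] at hclosed hshift
  refine mul_left_cancel₀ hpos.ne' ?_
  linear_combination (2 * (k : ℝ) - 1) * (2 * k + 1) * (2 * k + 3) * (2 * k + 5) * (2 * k + 7) *
    (2 * k + 9) * (2 * k + 11) * hclosed +
      8192 / 693 * (G k).eval 1 * 2 ^ (7 / 2 : ℝ) * hshift

theorem jacobiIntegral_five_halves_four (hG : IsGegenbauer (5 / 2) G) (k : ℕ) :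
    (2 * (k : ℝ) - 5) * (2 * k - 3) * (2 * k + 13) * (2 * k + 15) *
        jacobiIntegral (5 / 2) 4 (G k) =
      -64 * ((15 - 5 * k - k ^ 2) * (-3 + 5 * k + k ^ 2)) * jacobiIntegral (5 / 2) 2 (G k) := by
  have hG' : IsGegenbauer (2 + 1 / 2) G := by norm_num; exact hG
  have hleft₁ := hG'.jacobiIntegral_add_one_left (a := 5 / 2) (by norm_num) (by norm_num) k
  have hleft₂ := hG'.jacobiIntegral_add_one_left (a := 7 / 2) (by norm_num) (by norm_num) k
  have hright₁ := jacobiIntegral_add_one_right (a := 5 / 2) (b := 3)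
    (by norm_num) (by norm_num) (G k)
  have hright₂ := jacobiIntegral_add_one_right (a := 5 / 2) (b := 2)
    (by norm_num) (by norm_num) (G k)
  have hright₃ := jacobiIntegral_add_one_right (a := 7 / 2) (b := 2)
    (by norm_num) (by norm_num) (G k)
  norm_num at hleft₁ hleft₂ hright₁ hright₂ hright₃
  rw [hright₁, hright₂, hright₃]
  linear_combination 4 * (3 - 2 * k) * (13 + 2 * k) * hleft₂ +
    4 * (90 - 4 * (5 - 2 * k) * (15 + 2 * k)) * hleft₁

theorem Lambda7_eq (hG : IsGegenbauer (5 / 2) G) (k : ℕ) :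
    Lambda7 G k = 3932160 * Real.pi ^ 3 * ((15 - 5 * k - k ^ 2) * (-3 + 5 * k + k ^ 2)) /
      ((2 * k - 5) * (2 * k - 3) * (2 * k - 1) * (2 * k + 1) * (2 * k + 3) * (2 * k + 5) *
        (2 * k + 7) * (2 * k + 9) * (2 * k + 11) * (2 * k + 13) * (2 * k + 15)) := by
  have htwo := hG.jacobiIntegral_five_halves_two k
  have hfour := hG.jacobiIntegral_five_halves_four k
  have hval : (G k).eval 1 ≠ 0 := by
    rw [hG.eval_one_eq_choose]
    exact_mod_cast (Nat.choose_pos (Nat.le_add_left 4 k)).ne'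
  have hpow : (2 : ℝ) ^ (5 / 2 : ℝ) * 2 ^ (7 / 2 : ℝ) = 64 := by
    rw [← Real.rpow_add two_pos]
    norm_num
  have hk₁ : 2 * (k : ℝ) - 1 ≠ 0 := by
    exact_mod_cast two_mul_natCast_sub_ne_zero k (n := 1) (by decide)
  have hk₃ : 2 * (k : ℝ) - 3 ≠ 0 := by
    exact_mod_cast two_mul_natCast_sub_ne_zero k (n := 3) (by decide)
  have hk₅ : 2 * (k : ℝ) - 5 ≠ 0 := by
    exact_mod_cast two_mul_natCast_sub_ne_zero k (n := 5) (by decide)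
  rw [Lambda7_eq_jacobiIntegral, eq_div_iff (by positivity)]
  field_simp
  linear_combination
    2 ^ (5 / 2 : ℝ) * (2 * (k : ℝ) - 1) * (2 * k + 1) * (2 * k + 3) * (2 * k + 5) * (2 * k + 7) *
      (2 * k + 9) * (2 * k + 11) * hfour -
    64 * (15 - 5 * k - k ^ 2) * (-3 + 5 * k + k ^ 2) * 2 ^ (5 / 2 : ℝ) * htwo +
    61440 * (15 - 5 * k - k ^ 2) * (-3 + 5 * k + k ^ 2) * (G k).eval 1 * hpow

theorem Lambda7_neg (hG : IsGegenbauer (5 / 2) G) {k : ℕ} (hk : 2 ≤ k) : Lambda7 G k < 0 := by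
  rw [hG.Lambda7_eq]
  obtain rfl | hk := hk.eq_or_lt
  · have : 0 < Real.pi ^ 3 := by positivity
    norm_num
    linarith
  · have hk : (3 : ℝ) ≤ k := by exact_mod_cast hk
    have h₁ : 0 < 2 * (k : ℝ) - 1 := by linarith
    have h₃ : 0 < 2 * (k : ℝ) - 3 := by linarith
    have h₅ : 0 < 2 * (k : ℝ) - 5 := by linarith
    refine div_neg_of_neg_of_pos (mul_neg_of_pos_of_neg (by positivity) ?_) (by positivity)
    exact mul_neg_of_neg_of_pos (by nlinarith) (by nlinarith)

end FiveHalves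

end IsGegenbauer

theorem natCast_choose_four {K : Type*} [DivisionRing K] [CharZero K] (k : ℕ) :
    ((k + 4).choose 4 : K) = (k + 1) * (k + 2) * (k + 3) * (k + 4) / 24 := by
  rw [Nat.cast_choose_eq_ascPochhammer_div, show k + 4 - (4 - 1) = k + 1 by lia]
  norm_num [ascPochhammer_succ_eval, add_assoc, Nat.factorial]

theorem funk_hecke_coefficients_dimension_seven (C : ℕ → Polynomial ℝ)
    (hC : IsGegenbauer (5/2) C) :
    (∀ k : ℕ,
        3 / (2 * Real.pi ^ 3) * ((k + 4).choose 4 : ℝ) * Lambda7 C k =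
          245760 * ((k : ℝ) + 1) * ((k : ℝ) + 2) * ((k : ℝ) + 3) * ((k : ℝ) + 4) *
              (15 - 5 * (k : ℝ) - (k : ℝ) ^ 2) * (-3 + 5 * (k : ℝ) + (k : ℝ) ^ 2) /
            ((2 * (k : ℝ) - 5) * (2 * (k : ℝ) - 3) * (2 * (k : ℝ) - 1) * (2 * (k : ℝ) + 1) *
              (2 * (k : ℝ) + 3) * (2 * (k : ℝ) + 5) * (2 * (k : ℝ) + 7) * (2 * (k : ℝ) + 9) *
              (2 * (k : ℝ) + 11) * (2 * (k : ℝ) + 13) * (2 * (k : ℝ) + 15))) ∧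
      0 < Lambda7 C 0 ∧ 0 < Lambda7 C 1 ∧ ∀ k : ℕ, 2 ≤ k → Lambda7 C k < 0 := by
  refine ⟨fun k ↦ ?_, ?_, ?_, fun k hk ↦ hC.Lambda7_neg hk⟩
  · rw [hC.Lambda7_eq, natCast_choose_four]
    field_simp
    ring
  · rw [hC.Lambda7_eq]
    norm_num
    positivity
  · rw [hC.Lambda7_eq]
    norm_num
    positivity
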